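/- Let K be a field, A = K[x_1, ..., x_n], and F ∈ A^{l×m} with rank(F) = r > 0. If the r × r reduced minors of F generate the unit ideal A (i.e. J_r(F) = A), then there exist U ∈ GL_l(A) and V ∈ GL_m(A) such that U·F·V is the block matrix with an r × r block G ∈ A^{r×r} in the upper-left corner and zeros elsewhere. -/

import Mathlib

/-- The set of all `i × i` minors of a matrix. -/
def minorsSet {R : Type*} [CommRing R] {l m : ℕ} (i : ℕ)
    (F : Matrix (Fin l) (Fin m) R) : Set R :=
  {a | ∃ (f : Fin i → Fin l) (g : Fin i → Fin m),
      StrictMono f ∧ StrictMono g ∧ a = (F.submatrix f g).det}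

/-- `d` is a greatest common divisor of the set `s`. -/
def IsGcdOf {R : Type*} [CommRing R] (d : R) (s : Set R) : Prop :=
  (∀ a ∈ s, d ∣ a) ∧ ∀ c : R, (∀ a ∈ s, c ∣ a) → c ∣ d

/-- `J_i(F) = A`: letting `d` be a gcd of the `i × i` minors of `F`, the `i × i`
reduced minors (the minors divided by `d`) generate the unit ideal. -/
def ReducedMinorsUnitIdeal {R : Type*} [CommRing R] {l m : ℕ} (i : ℕ)
    (F : Matrix (Fin l) (Fin m) R) : Prop :=
  ∃ d : R, IsGcdOf d (minorsSet i F) ∧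
    Ideal.span {b : R | d * b ∈ minorsSet i F} = ⊤

/-! Cramer's rule turns each `r × r` reduced minor `b` of `F` into a matrix `P` with `F * P = b • F`
whose rows lie generically in the row space of `F`. Since the reduced minors generate the unit
ideal, a combination of these matrices is an idempotent `E` of rank `r` with `F * E = F`. By the
Quillen–Suslin theorem `E` is conjugate to the diagonal idempotent `stdProj`, so that a change of
basis makes all but the first `r` columns of `F` vanish; transposing, the same holds for the rows.

The Quillen–Suslin theorem is proved for idempotent matrices by induction on the number of
variables. Over the field of rational functions in one variable, the induction hypothesis conjugates
`E` to a standard projection, and clearing denominators leaves a conjugation up to a monic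
polynomial. Horrocks' theorem turns this into a conjugation over each local ring of the base, and
Quillen patching shows that `E` is conjugate to its value at `0`, where the induction hypothesis
applies again. -/

section Horrocks

open Polynomial TensorProduct IsLocalRing

/-- `g : M → P` and `h : P → M` are inverse to each other up to multiplication by `f`. This is the
denominator-free form of an isomorphism between the localizations of `M` and `P` away from `f`. -/
structure IsInverseUpTo {A M P : Type*} [CommRing A] [AddCommGroup M] [Module A M]
    [AddCommGroup P] [Module A P] (f : A) (g : M →ₗ[A] P) (h : P →ₗ[A] M) : Prop where
  left_inv : ∀ x, h (g x) = f • x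
  right_inv : ∀ y, g (h y) = f • y

namespace IsInverseUpTo

variable {A M P : Type*} [CommRing A] [AddCommGroup M] [Module A M] [AddCommGroup P] [Module A P]
  {f : A} {g : M →ₗ[A] P} {h : P →ₗ[A] M}

theorem injective_right [IsDomain A] [Module.IsTorsionFree A P] (H : IsInverseUpTo f g h)
    (hf : f ≠ 0) : Function.Injective h := fun x y hxy =>
  smul_right_injective P hf (by simp only [← H.right_inv, hxy])

theorem comp_equiv {M' : Type*} [AddCommGroup M'] [Module A M'] (H : IsInverseUpTo f g h)
    (e : M' ≃ₗ[A] M) : IsInverseUpTo f (g ∘ₗ e.toLinearMap) (e.symm.toLinearMap ∘ₗ h) where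
  left_inv x := by simp [H.left_inv]
  right_inv y := by simp [H.right_inv]

end IsInverseUpTo

section Kernel

variable {A P : Type*} [CommRing A] [AddCommGroup P] [Module A P] {φ : P →ₗ[A] A} {p : P}

/-- The projection onto the kernel of a functional `φ` along a vector `p` with `φ p = 1`. -/
def kerProj (hp : φ p = 1) : P →ₗ[A] LinearMap.ker φ :=
  (LinearMap.id - φ.smulRight p).codRestrict _ fun x => by simp [hp]

theorem coe_kerProj (hp : φ p = 1) (x : P) : (kerProj hp x : P) = x - φ x • p := rfl

theorem kerProj_self (hp : φ p = 1) : kerProj hp p = 0 :=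
  Subtype.ext (by simp [coe_kerProj, hp])

theorem kerProj_coe (hp : φ p = 1) (x : LinearMap.ker φ) : kerProj hp x = x :=
  Subtype.ext (by simp [coe_kerProj, LinearMap.mem_ker.1 x.2])

theorem free_of_free_ker (hp : φ p = 1) [Module.Free A (LinearMap.ker φ)] : Module.Free A P := by
  let ε : (A × LinearMap.ker φ) ≃ₗ[A] P := LinearEquiv.ofLinearMap
    ((LinearMap.toSpanSingleton A P p).coprod (LinearMap.ker φ).subtype)
    (φ.prod (kerProj hp))
    (LinearMap.ext fun x => by simp [coe_kerProj])
    (LinearMap.ext fun x => by simp [hp, kerProj_self, kerProj_coe])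
  exact Module.Free.of_equiv ε

theorem IsInverseUpTo.exists_isInverseUpTo_ker {M : Type*} [AddCommGroup M] [Module A M] {f : A}
    {g : A × M →ₗ[A] P} {h : P →ₗ[A] A × M} (H : IsInverseUpTo f g h) (hp : φ p = 1) :
    ∃ (g' : M →ₗ[A] LinearMap.ker φ) (h' : LinearMap.ker φ →ₗ[A] M),
      IsInverseUpTo ((h p).1 * f) g' h' := by
  let β : P →ₗ[A] M :=
    (h p).1 • (LinearMap.snd A A M ∘ₗ h) - (LinearMap.fst A A M ∘ₗ h).smulRight (h p).2
  have hβ (x : P) : β x = (h p).1 • (h x).2 - (h x).1 • (h p).2 := rfl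
  refine ⟨kerProj hp ∘ₗ g ∘ₗ LinearMap.inr A A M, β ∘ₗ (LinearMap.ker φ).subtype, ⟨?_, ?_⟩⟩
  · intro y
    have hβp : β p = 0 := by simp [hβ]
    have hβg : β (g (0, y)) = ((h p).1 * f) • y := by simp [hβ, H.left_inv, mul_smul]
    simp [coe_kerProj, hβp, hβg]
  · intro x
    have hg : g (0, β x) = ((h p).1 * f) • (x : P) - ((h x).1 * f) • p :=
      calc g (0, β x) = (h p).1 • g (h x) - (h x).1 • g (h p) := by
            simp only [← map_smul, ← map_sub]
            congr 1
            ext <;> simp [hβ, mul_comm]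
        _ = _ := by simp only [H.right_inv, mul_smul]
    simp [hg, kerProj_self, kerProj_coe]

end Kernel

/-- A dual basis of `P` provides generators of the inverse fractional ideal. -/
theorem isUnit_range_of_injective {A K P : Type*} [CommRing A] [Field K] [Algebra A K]
    [IsFractionRing A K] [AddCommGroup P] [Module A P] [Module.Finite A P] [Module.Projective A P]
    [Nontrivial P] {α : P →ₗ[A] A} (hα : Function.Injective α) :
    IsUnit (LinearMap.range (Algebra.linearMap A K ∘ₗ α)) := by
  obtain ⟨n, π, s, -, -, hπs⟩ := Module.Finite.exists_comp_eq_id_of_projective A P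
  obtain ⟨x₀, hx₀⟩ := exists_ne (0 : P)
  have hαx₀ : algebraMap A K (α x₀) ≠ 0 := by simpa using (map_ne_zero_iff α hα).2 hx₀
  let q (i : Fin n) : P := π fun j => if i = j then 1 else 0
  let b (i : Fin n) : K := algebraMap A K (s x₀ i) / algebraMap A K (α x₀)
  have hb (x : P) (i : Fin n) : algebraMap A K (α x) * b i = algebraMap A K (s x i) := by
    have hcomm : α x • x₀ = α x₀ • x := hα (by simp [mul_comm])
    have hs : α x * s x₀ i = α x₀ * s x i := by simpa using congrFun (congrArg s hcomm) i
    rw [mul_div_assoc', div_eq_iff hαx₀, ← map_mul, ← map_mul, hs, mul_comm]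
  have hsum : ∑ i, algebraMap A K (α (q i)) * b i = 1 := by
    have hα₀ : ∑ i, s x₀ i * α (q i) = α x₀ :=
      ((α ∘ₗ π).pi_apply_eq_sum_univ (s x₀)).symm.trans
        (congrArg α (LinearMap.congr_fun hπs x₀))
    simp only [b, mul_div_assoc', ← Finset.sum_div, ← map_mul, ← map_sum, mul_comm (α _), hα₀,
      div_self hαx₀]
  refine IsUnit.of_mul_eq_one (Submodule.span A (Set.range b)) (le_antisymm ?_ ?_)
  · rw [← Submodule.span_eq (LinearMap.range _), Submodule.span_mul_span, Submodule.span_le]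
    rintro _ ⟨_, ⟨x, rfl⟩, _, ⟨i, rfl⟩, rfl⟩
    exact Submodule.mem_one.2 ⟨s x i, (hb x i).symm⟩
  · rw [Submodule.one_le, ← hsum]
    exact sum_mem fun i _ => Submodule.mul_mem_mul ⟨_, rfl⟩ (Submodule.subset_span ⟨i, rfl⟩)

/-- `α` embeds `P` as an invertible fractional ideal, and the Picard group of a GCD domain is
trivial. -/
theorem free_of_injective_of_isGCDMonoid {A P : Type*} [CommRing A] [IsDomain A] [IsGCDMonoid A]
    [AddCommGroup P] [Module A P] [Module.Finite A P] [Module.Projective A P] {α : P →ₗ[A] A}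
    (hα : Function.Injective α) : Module.Free A P := by
  rcases subsingleton_or_nontrivial P with _ | _
  · infer_instance
  let j := Algebra.linearMap A (FractionRing A) ∘ₗ α
  have hj : Function.Injective j := (IsFractionRing.injective A (FractionRing A)).comp hα
  have hunit : IsUnit (LinearMap.range j) := isUnit_range_of_injective hα
  have : Module.Free A (LinearMap.range j) :=
    inferInstanceAs (Module.Free A (hunit.unit : Submodule A (FractionRing A)))
  exact Module.Free.of_equiv (LinearEquiv.ofInjective j hj).symm

/-- Nakayama's lemma applies because `L[X] ⧸ I` is a finite `L`-module. -/
theorem eq_top_of_monic_mem_of_sup_map_C_eq_top {L : Type*} [CommRing L] {J : Ideal L}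
    (hJ : J ≤ Ideal.jacobson ⊥) {I : Ideal L[X]} {h : L[X]} (hh : h.Monic) (hI : h ∈ I)
    (hIJ : I ⊔ J.map C = ⊤) : I = ⊤ := by
  have := hh.finite_quotient
  have hfin : Module.Finite L (L[X] ⧸ I) :=
    have hle : Ideal.span {h} ≤ I := (Ideal.span_singleton_le_iff_mem I).2 hI
    Module.Finite.of_surjective (Ideal.Quotient.factorₐ L hle).toLinearMap
      (Ideal.Quotient.factor_surjective hle)
  have hmap : J.map (algebraMap L (L[X] ⧸ I)) = ⊤ := by
    have h := congrArg (Ideal.map (Ideal.Quotient.mk I)) hIJ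
    rwa [Ideal.map_sup, Ideal.map_quotient_self, bot_sup_eq, Ideal.map_map, Ideal.map_top] at h
  have htop : (⊤ : Submodule L (L[X] ⧸ I)) = ⊥ :=
    Submodule.eq_bot_of_le_smul_of_le_jacobson_bot J ⊤ hfin.fg_top
      (by rw [Ideal.smul_top_eq_map, hmap, Submodule.restrictScalars_top]) hJ
  have : Subsingleton (L[X] ⧸ I) :=
    (Submodule.subsingleton_iff L).1 (subsingleton_of_bot_eq_top htop.symm)
  exact Ideal.Quotient.subsingleton_iff.1 this

theorem sup_map_C_maximalIdeal_eq_top {L : Type*} [CommRing L] [IsLocalRing L] {I : Ideal L[X]}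
    {u : L[X]} (hu : u ∈ I) (hu1 : u.map (residue L) = 1) :
    I ⊔ (maximalIdeal L).map C = ⊤ := by
  have hker : 1 - u ∈ (maximalIdeal L).map C := by
    rw [← ker_residue, ← ker_mapRingHom, RingHom.mem_ker]
    simp [hu1]
  rw [Ideal.eq_top_iff_one, ← add_sub_cancel u 1]
  exact Submodule.add_mem_sup hu hker

theorem exists_functional_eq_one_eq_zero {B Q : Type*} [CommRing B] [IsDomain B]
    [IsPrincipalIdealRing B] [AddCommGroup Q] [Module B Q] [Module.Free B Q] [Module.Finite B Q]
    (hQ : 2 ≤ Module.finrank B Q) (w : Q) : ∃ (p : Q) (φ : Q →ₗ[B] B), φ p = 1 ∧ φ w = 0 := by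
  classical
  let _ := IsBezout.toGCDDomain B
  let b := Module.finBasis B Q
  let i : Fin (Module.finrank B Q) := ⟨0, by omega⟩
  let j : Fin (Module.finrank B Q) := ⟨1, by omega⟩
  have hij : i ≠ j := by simp [i, j]
  by_cases h0 : gcd (b.repr w i) (b.repr w j) = 0
  · exact ⟨b i, b.coord i, by simp, by simpa using ((gcd_eq_zero_iff _ _).1 h0).1⟩
  obtain ⟨u, hu⟩ := gcd_dvd_left (b.repr w i) (b.repr w j)
  obtain ⟨v, hv⟩ := gcd_dvd_right (b.repr w i) (b.repr w j)
  obtain ⟨x, y, hxy⟩ := exists_gcd_eq_mul_add_mul (b.repr w i) (b.repr w j)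
  set g := gcd (b.repr w i) (b.repr w j)
  have hbezout : u * x + v * y = 1 :=
    mul_left_cancel₀ h0 (by linear_combination x * hu.symm + y * hv.symm - hxy)
  refine ⟨y • b i - x • b j, v • b.coord i - u • b.coord j, ?_, ?_⟩
  · have hφ : (v • b.coord i - u • b.coord j) (y • b i - x • b j) = v * y + u * x := by
      simp [hij, hij.symm]
    linear_combination hφ + hbezout
  · simp only [LinearMap.sub_apply, LinearMap.smul_apply, Module.Basis.coord_apply, smul_eq_mul]
    linear_combination v * hu - u * hv

theorem exists_functional_algebraMap_eq {A B P : Type*} [CommRing A] [CommRing B] [Algebra A B]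
    [AddCommGroup P] [Module A P] [Module.Projective A P]
    (hsurj : Function.Surjective (algebraMap A B)) (φ : B ⊗[A] P →ₗ[B] B) :
    ∃ ψ : P →ₗ[A] A, ∀ x, algebraMap A B (ψ x) = φ (1 ⊗ₜ x) := by
  obtain ⟨ψ, hψ⟩ := Module.projective_lifting_property (Algebra.linearMap A B)
    (φ.restrictScalars A ∘ₗ TensorProduct.mk A B P 1) hsurj
  exact ⟨ψ, LinearMap.congr_fun hψ⟩

theorem IsInverseUpTo.finrank_le_finrank_baseChange {A B M P : Type*} [CommRing A] [CommRing B]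
    [IsDomain B] [Algebra A B] [AddCommGroup M] [Module A M] [AddCommGroup P] [Module A P]
    [Module.Free A M] [Nontrivial A] [Module.Finite A P] {f : A} {g : M →ₗ[A] P} {h : P →ₗ[A] M}
    (H : IsInverseUpTo f g h) (hf : algebraMap A B f ≠ 0) :
    Module.finrank A M ≤ Module.finrank B (B ⊗[A] P) := by
  have hinj : Function.Injective (g.baseChange B) := by
    have hcomp (x : B ⊗[A] M) : h.baseChange B (g.baseChange B x) = algebraMap A B f • x := by
      induction x with
      | zero => simp
      | add x y hx hy => simp only [map_add, hx, hy, smul_add]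
      | tmul c x => simp [H.left_inv, TensorProduct.smul_tmul']
    exact fun x y hxy => smul_right_injective _ hf (by
      simpa only [hcomp] using congrArg (h.baseChange B) hxy)
  rw [← Module.finrank_baseChange (R := B)]
  exact LinearMap.finrank_le_finrank_of_injective hinj

theorem exists_monic_add_X_pow_mul {L : Type*} [CommRing L] [Nontrivial L] (q : L[X]) {f : L[X]}
    (hf : f.Monic) : ∃ N : ℕ, (q + X ^ N * f).Monic := by
  refine ⟨q.natDegree + 1, ((monic_X_pow _).mul hf).add_of_right ?_⟩
  refine degree_le_natDegree.trans_lt ?_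
  rw [hf.degree_mul, degree_X_pow, degree_eq_natDegree hf.ne_zero]
  norm_cast
  omega

section LocalBase

variable {L P : Type*} [CommRing L] [IsLocalRing L] [AddCommGroup P] [Module L[X] P]
  [Module.Finite L[X] P] [Module.Projective L[X] P]

attribute [local instance] Polynomial.algebra

/-- Modulo the maximal ideal, `L[X]` becomes a principal ideal domain; there a vector `p₀` on which
some functional is one can be perturbed by multiples of `e`, which makes `α p₀` monic. -/
theorem exists_functional_eq_one_and_monic
    (hP : 2 ≤ Module.finrank (ResidueField L)[X] ((ResidueField L)[X] ⊗[L[X]] P))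
    (α : P →ₗ[L[X]] L[X]) {e : P} (he : (α e).Monic) :
    ∃ (p : P) (φ : P →ₗ[L[X]] L[X]), φ p = 1 ∧ (α p).Monic := by
  have hmap (q : L[X]) : algebraMap L[X] (ResidueField L)[X] q = q.map (residue L) := rfl
  have hsurj : Function.Surjective (algebraMap L[X] (ResidueField L)[X]) :=
    map_surjective _ residue_surjective
  obtain ⟨p', φ', hp', he'⟩ := exists_functional_eq_one_eq_zero hP (1 ⊗ₜ e)
  obtain ⟨p₀, rfl⟩ := TensorProduct.mk_surjective L[X] P (ResidueField L)[X] hsurj p'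
  obtain ⟨ψ, hψ⟩ := exists_functional_algebraMap_eq hsurj φ'
  rw [TensorProduct.mk_apply, ← hψ, hmap] at hp'
  rw [← hψ, hmap] at he'
  obtain ⟨N, hN⟩ := exists_monic_add_X_pow_mul (α p₀) he
  let p : P := p₀ + (X ^ N : L[X]) • e
  have hαp : (α p).Monic := by simpa [p] using hN
  have hψp : (ψ p).map (residue L) = 1 := by simp [p, hp', he']
  let I : Ideal L[X] := LinearMap.range (LinearMap.applyₗ (R := L[X]) (M₂ := L[X]) p)
  have hI : I = ⊤ :=
    eq_top_of_monic_mem_of_sup_map_C_eq_top (maximalIdeal_le_jacobson ⊥) hαp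
      ⟨α, rfl⟩ (sup_map_C_maximalIdeal_eq_top ⟨ψ, rfl⟩ hψp)
  obtain ⟨φ, hφ⟩ := (Ideal.eq_top_iff_one I).1 hI
  exact ⟨p, φ, hφ, hαp⟩

/-- **Horrocks' theorem** over a local factorial base. -/
theorem IsInverseUpTo.free_of_monic [IsDomain L] [UniqueFactorizationMonoid L] {r : ℕ} {f : L[X]}
    (hf : f.Monic) {g : (Fin r → L[X]) →ₗ[L[X]] P} {h : P →ₗ[L[X]] Fin r → L[X]}
    (H : IsInverseUpTo f g h) : Module.Free L[X] P := by
  induction r generalizing P f with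
  | zero =>
    have := (H.injective_right hf.ne_zero).subsingleton
    infer_instance
  | succ r ih =>
    have H' := H.comp_equiv (Fin.consLinearEquiv L[X] fun _ => L[X])
    rcases Nat.eq_zero_or_pos r with rfl | hr
    · exact free_of_injective_of_isGCDMonoid (α := LinearMap.proj 0 ∘ₗ h) fun x y hxy =>
        H.injective_right hf.ne_zero (_root_.funext fun i => Fin.fin_one_eq_zero i ▸ hxy)
    have hrank : 2 ≤ Module.finrank (ResidueField L)[X] ((ResidueField L)[X] ⊗[L[X]] P) := by
      have hle := H.finrank_le_finrank_baseChange (B := (ResidueField L)[X]) (hf.map _).ne_zero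
      rw [Module.finrank_fin_fun] at hle
      omega
    obtain ⟨p, φ, hφ, hp⟩ := exists_functional_eq_one_and_monic hrank (LinearMap.proj 0 ∘ₗ h)
      (e := g (Pi.single 0 1)) (by simpa [H.left_inv] using hf)
    have : Module.Projective L[X] (LinearMap.ker φ) :=
      .of_split (LinearMap.ker φ).subtype (kerProj hφ) (LinearMap.ext (kerProj_coe hφ))
    have : Module.Finite L[X] (LinearMap.ker φ) :=
      .of_surjective (kerProj hφ) fun x => ⟨x, kerProj_coe hφ x⟩
    obtain ⟨g', h', Hker⟩ := H'.exists_isInverseUpTo_ker hφ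
    have : Module.Free L[X] (LinearMap.ker φ) := ih (hp.mul hf) Hker
    exact free_of_free_ker hφ

end LocalBase

end Horrocks

section Idempotent

variable {A n : Type*} [CommRing A] [Fintype n]

theorem mulVec_eq_self_of_mem_range {E : Matrix n n A} (hE : IsIdempotentElem E) {x : n → A}
    (hx : x ∈ LinearMap.range E.mulVecLin) : E.mulVec x = x := by
  obtain ⟨v, rfl⟩ := hx
  simp [hE.eq]

theorem projective_range_mulVecLin {E : Matrix n n A} (hE : IsIdempotentElem E) :
    Module.Projective A (LinearMap.range E.mulVecLin) :=
  .of_split (LinearMap.range E.mulVecLin).subtype E.mulVecLin.rangeRestrict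
    (LinearMap.ext fun x => Subtype.ext (mulVec_eq_self_of_mem_range hE x.2))

variable [DecidableEq n]

theorem isCompl_range_mulVecLin {E : Matrix n n A} (hE : IsIdempotentElem E) :
    IsCompl (LinearMap.range E.mulVecLin) (LinearMap.range (1 - E).mulVecLin) := by
  have h : IsIdempotentElem E.mulVecLin := hE.map Matrix.toLinAlgEquiv'
  have hsub : (1 - E).mulVecLin = 1 - E.mulVecLin := by
    ext v i; simp [Module.End.one_eq_id]
  rw [hsub, ← LinearMap.IsIdempotentElem.ker_eq_range_one_sub h]
  exact LinearMap.IsIdempotentElem.isCompl h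

theorem free_range_diagonal (p : n → Prop) [DecidablePred p] :
    Module.Free A (LinearMap.range
      (Matrix.diagonal fun i => if p i then (1 : A) else 0).mulVecLin) := by
  let ι : ({i // p i} → A) →ₗ[A] n → A := Function.ExtendByZero.linearMap A Subtype.val
  have hι (x : n → A) : (Matrix.diagonal fun i => if p i then (1 : A) else 0).mulVec x =
      ι fun i => x i := by
    ext i
    by_cases hi : p i
    · simp [ι, Matrix.mulVec_diagonal, hi, Subtype.val_injective.extend_apply _ _ ⟨i, hi⟩]
    · simp [ι, Matrix.mulVec_diagonal, hi]
  have hinj : Function.Injective ι := Function.extend_injective Subtype.val_injective (0 : n → A)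
  have hrange : LinearMap.range ι = LinearMap.range
      (Matrix.diagonal fun i => if p i then (1 : A) else 0).mulVecLin := by
    refine le_antisymm ?_ ?_
    · rintro _ ⟨y, rfl⟩
      exact ⟨ι y, (hι _).trans (congrArg ι (funext fun i =>
        Subtype.val_injective.extend_apply y 0 i))⟩
    · rintro _ ⟨x, rfl⟩
      exact ⟨_, (hι x).symm⟩
  exact hrange ▸ Module.Free.of_equiv (LinearEquiv.ofInjective ι hinj)

end Idempotent

/-- The diagonal idempotent with `1` in the first `r` places. -/
def stdProj (A : Type*) [CommRing A] (N r : ℕ) : Matrix (Fin N) (Fin N) A :=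
  Matrix.diagonal fun i => if (i : ℕ) < r then 1 else 0

theorem mapMatrix_stdProj {A B : Type*} [CommRing A] [CommRing B] (φ : A →+* B) (N r : ℕ) :
    φ.mapMatrix (stdProj A N r) = stdProj B N r := by
  simp [stdProj, apply_ite φ]

theorem one_sub_stdProj {A : Type*} [CommRing A] (N r : ℕ) :
    1 - stdProj A N r = Matrix.diagonal fun i : Fin N => if ¬(i : ℕ) < r then (1 : A) else 0 := by
  rw [stdProj, ← Matrix.diagonal_one, Matrix.diagonal_sub]
  congr 1
  ext i
  by_cases hi : (i : ℕ) < r <;> simp [hi]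

theorem exists_isConj_stdProj_of_free {A : Type*} [CommRing A] [Nontrivial A] {N : ℕ}
    {E : Matrix (Fin N) (Fin N) A} (hE : IsIdempotentElem E)
    [Module.Free A (LinearMap.range E.mulVecLin)]
    [Module.Free A (LinearMap.range (1 - E).mulVecLin)] :
    ∃ r ≤ N, IsConj (stdProj A N r) E := by
  let r := Module.finrank A (LinearMap.range E.mulVecLin)
  let s := Module.finrank A (LinearMap.range (1 - E).mulVecLin)
  let b₁ : Module.Basis (Fin r) A (LinearMap.range E.mulVecLin) := Module.finBasis A _
  let b₂ : Module.Basis (Fin s) A (LinearMap.range (1 - E).mulVecLin) := Module.finBasis A _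
  let b₀ := (b₁.prod b₂).map (Submodule.prodEquivOfIsCompl _ _ (isCompl_range_mulVecLin hE))
  have hN : r + s = N := by simpa using (Module.finrank_eq_card_basis b₀).symm
  let b : Module.Basis (Fin N) A (Fin N → A) := b₀.reindex (finSumFinEquiv.trans (finCongr hN))
  have hb (j : Fin N) : E.mulVec (b j) = if (j : ℕ) < r then b j else 0 := by
    obtain ⟨i | i, rfl⟩ := (finSumFinEquiv.trans (finCongr hN)).surjective j
    · simp [b, b₀, mulVec_eq_self_of_mem_range hE (b₁ i).2]
    · have h := mulVec_eq_self_of_mem_range hE.one_sub (b₂ i).2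
      rw [Matrix.sub_mulVec, Matrix.one_mulVec, sub_eq_self] at h
      simp [b, b₀, h]
  let U : (Matrix (Fin N) (Fin N) A)ˣ :=
    ⟨(Pi.basisFun A (Fin N)).toMatrix b, b.toMatrix (Pi.basisFun A (Fin N)),
      Module.Basis.toMatrix_mul_toMatrix_flip _ _, Module.Basis.toMatrix_mul_toMatrix_flip _ _⟩
  refine ⟨r, by omega, U, ?_⟩
  ext i j
  have h : (E * U.val) i j = E.mulVec (b j) i := by
    simp [U, Matrix.mul_apply, Matrix.mulVec, dotProduct, Module.Basis.toMatrix_apply]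
  rw [h, hb, stdProj, Matrix.mul_diagonal]
  split_ifs <;> simp [U, Module.Basis.toMatrix_apply]

/-- `D` and `E` are conjugate up to `s`: the conjugating matrix has an inverse only up to the
scalar `s`. This is the denominator-free form of conjugacy over the localization away from `s`. -/
def ConjUpTo {A n : Type*} [CommRing A] [Fintype n] [DecidableEq n] (s : A)
    (D E : Matrix n n A) : Prop :=
  ∃ G G' : Matrix n n A, G * G' = s • 1 ∧ G' * G = s • 1 ∧ SemiconjBy G D E

section ConjUpTo

theorem exists_map_eq_smul_of_isLocalization {A B m n : Type*} [CommRing A] [CommRing B]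
    [Finite m] [Finite n] [Algebra A B] (S : Submonoid A) [IsLocalization S B] (V : Matrix m n B) :
    ∃ s ∈ S, ∃ H : Matrix m n A, H.map (algebraMap A B) = algebraMap A B s • V := by
  obtain ⟨s, hs⟩ := IsLocalization.exist_integer_multiples_of_finite S
    fun x : m × n => V x.1 x.2
  choose H hH using hs
  refine ⟨s, s.2, Matrix.of fun i j => H (i, j), ?_⟩
  ext i j
  simp [hH, Algebra.smul_def]

variable {A B n : Type*} [CommRing A] [CommRing B] [Fintype n] [DecidableEq n]

theorem mapMatrix_smul_one (φ : A →+* B) (s : A) :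
    φ.mapMatrix (s • (1 : Matrix n n A)) = φ s • 1 := by
  ext i j
  simp [Matrix.one_apply, apply_ite φ]

theorem semiconjBy_of_mul_eq_smul_one [IsDomain A] {s : A} (hs : s ≠ 0)
    {D E G G' : Matrix n n A} (hGG' : G * G' = s • 1) (hG'G : G' * G = s • 1)
    (hG : SemiconjBy G D E) : SemiconjBy G' E D := by
  refine smul_right_injective (Matrix n n A) hs ?_
  calc s • (G' * E) = G' * E * (G * G') := by simp [hGG']
    _ = G' * (E * G) * G' := by simp only [mul_assoc]
    _ = G' * G * (D * G') := by rw [← hG.eq]; simp only [mul_assoc]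
    _ = s • (D * G') := by simp [hG'G]

namespace ConjUpTo

variable {s : A} {D E : Matrix n n A}

theorem mul_left (t : A) (h : ConjUpTo s D E) : ConjUpTo (t * s) D E := by
  obtain ⟨G, G', hGG', hG'G, hG⟩ := h
  exact ⟨G, t • G', by rw [mul_smul_comm, hGG', mul_smul], by rw [smul_mul_assoc, hG'G, mul_smul],
    hG⟩

theorem one_sub (h : ConjUpTo s D E) : ConjUpTo s (1 - D) (1 - E) := by
  obtain ⟨G, G', hGG', hG'G, hG⟩ := h
  exact ⟨G, G', hGG', hG'G, (SemiconjBy.one_right G).sub_right hG⟩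

theorem map (φ : A →+* B) (h : ConjUpTo s D E) :
    ConjUpTo (φ s) (φ.mapMatrix D) (φ.mapMatrix E) := by
  obtain ⟨G, G', hGG', hG'G, hG⟩ := h
  exact ⟨φ.mapMatrix G, φ.mapMatrix G', by rw [← map_mul, hGG', mapMatrix_smul_one],
    by rw [← map_mul, hG'G, mapMatrix_smul_one], hG.map φ.mapMatrix⟩

theorem exists_isInverseUpTo [IsDomain A] (h : ConjUpTo s D E) (hs : s ≠ 0) :
    ∃ (g : LinearMap.range D.mulVecLin →ₗ[A] LinearMap.range E.mulVecLin)
      (g' : LinearMap.range E.mulVecLin →ₗ[A] LinearMap.range D.mulVecLin),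
      IsInverseUpTo s g g' := by
  obtain ⟨G, G', hGG', hG'G, hG⟩ := h
  have hG' := semiconjBy_of_mul_eq_smul_one hs hGG' hG'G hG
  refine ⟨G.mulVecLin.restrict ?_, G'.mulVecLin.restrict ?_, ?_, ?_⟩
  · rintro _ ⟨v, rfl⟩
    exact ⟨G.mulVec v, by simp [hG.eq]⟩
  · rintro _ ⟨v, rfl⟩
    exact ⟨G'.mulVec v, by simp [hG'.eq]⟩
  · exact fun x => Subtype.ext (by simp [hG'G, Matrix.smul_mulVec])
  · exact fun x => Subtype.ext (by simp [hGG', Matrix.smul_mulVec])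

end ConjUpTo

theorem exists_conjUpTo_of_isConj_map [Algebra A B] (S : Submonoid A) [IsLocalization S B]
    (hinj : Function.Injective (algebraMap A B)) {D E : Matrix n n A}
    (h : IsConj ((algebraMap A B).mapMatrix D) ((algebraMap A B).mapMatrix E)) :
    ∃ s ∈ S, ConjUpTo s D E := by
  obtain ⟨U, hU⟩ := h
  obtain ⟨s, hs, G, hG⟩ := exists_map_eq_smul_of_isLocalization S U.val
  obtain ⟨s', hs', G', hG'⟩ := exists_map_eq_smul_of_isLocalization S U⁻¹.val
  rw [← RingHom.mapMatrix_apply] at hG hG'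
  have hmap : Function.Injective ((algebraMap A B).mapMatrix : Matrix n n A → _) :=
    Matrix.map_injective hinj
  refine ⟨s * s', S.mul_mem hs hs', G, G', hmap ?_, hmap ?_, hmap ?_⟩
  · rw [map_mul, hG, hG', mapMatrix_smul_one, smul_mul_smul_comm, U.mul_inv, map_mul]
  · rw [map_mul, hG, hG', mapMatrix_smul_one, smul_mul_smul_comm, U.inv_mul, map_mul, mul_comm]
  · rw [map_mul, map_mul, hG, smul_mul_assoc, hU.eq, mul_smul_comm]

section LocalBase

open Polynomial

variable {L : Type*} [CommRing L] [IsDomain L] [IsLocalRing L] [UniqueFactorizationMonoid L]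
  {f : L[X]}

theorem ConjUpTo.free_range_of_monic {D E : Matrix n n L[X]} (h : ConjUpTo f D E) (hf : f.Monic)
    (hE : IsIdempotentElem E) [Module.Free L[X] (LinearMap.range D.mulVecLin)] :
    Module.Free L[X] (LinearMap.range E.mulVecLin) := by
  have := projective_range_mulVecLin hE
  obtain ⟨g, g', H⟩ := h.exists_isInverseUpTo hf.ne_zero
  exact (H.comp_equiv (Module.finBasis _ _).equivFun.symm).free_of_monic hf

theorem ConjUpTo.exists_isConj_stdProj_of_monic {N r : ℕ} {E : Matrix (Fin N) (Fin N) L[X]}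
    (h : ConjUpTo f (stdProj L[X] N r) E) (hf : f.Monic) (hE : IsIdempotentElem E) :
    ∃ r' ≤ N, IsConj (stdProj L[X] N r') E := by
  have h₀ : Module.Free L[X] (LinearMap.range (stdProj L[X] N r).mulVecLin) :=
    free_range_diagonal _
  have h₁ : Module.Free L[X] (LinearMap.range (1 - stdProj L[X] N r).mulVecLin) :=
    one_sub_stdProj (A := L[X]) N r ▸ free_range_diagonal _
  have := h.free_range_of_monic hf hE
  have := h.one_sub.free_range_of_monic hf hE.one_sub
  exact exists_isConj_stdProj_of_free hE

end LocalBase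

end ConjUpTo

section Patching

open Polynomial

variable {R n : Type*} [CommRing R] [Fintype n] [DecidableEq n]

/-- The substitution `X ↦ X + a Y` from `R[X]` to `R[X][Y]`. -/
noncomputable def shiftHom (a : R) : R[X] →+* R[X][X] :=
  eval₂RingHom (C.comp C) (C X + C (C a) * X)

theorem shiftHom_C (a r : R) : shiftHom a (C r) = C (C r) := by simp [shiftHom]

theorem shiftHom_X (a : R) : shiftHom a X = C X + C (C a) * X := by simp [shiftHom]

theorem C_C_dvd_shiftHom_sub_C (s : R) (g : R[X]) : C (C s) ∣ shiftHom s g - C g := by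
  have hshift : shiftHom s g = (g.map (C.comp C)).eval (C X + C (C s) * X) := by
    rw [eval_map]; rfl
  have hC : C g = (g.map (C.comp C)).eval (C X) := by
    rw [eval_map, ← hom_eval₂, eval₂_C_X]
  have h := sub_dvd_eval_sub (C X + C (C s) * X : R[X][X]) (C X) (g.map (C.comp C))
  rw [← hshift, ← hC, add_sub_cancel_left] at h
  exact (dvd_mul_right _ _).trans h

theorem exists_mapMatrix_shiftHom_eq (s : R) (G : Matrix n n R[X]) :
    ∃ W : Matrix n n R[X][X],
      (shiftHom s).mapMatrix G = C.mapMatrix G + (C (C s) : R[X][X]) • W := by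
  choose w hw using C_C_dvd_shiftHom_sub_C s
  refine ⟨Matrix.of fun i j => w (G i j), ?_⟩
  ext1 i j
  simp [← hw]

theorem isConj_mapMatrix_comp {A B B' : Type*} [CommRing A] [CommRing B] [CommRing B']
    (τ : B →+* B') {σ σ' : A →+* B} {E : Matrix n n A}
    (h : IsConj (σ.mapMatrix E) (σ'.mapMatrix E)) :
    IsConj ((τ.comp σ).mapMatrix E) ((τ.comp σ').mapMatrix E) :=
  τ.mapMatrix.toMonoidHom.map_isConj h

/-- Multiplication by `c` is injective, so the quotients `U` and `U'` of `G₂ G₁'` and `G₁ G₂'` by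
`c` inherit the identities of an honest conjugation and its inverse. -/
theorem isConj_of_eq_add_smul {A : Type*} [CommRing A] [IsDomain A] {c : A} (hc : c ≠ 0)
    {D E₁ E₂ G₁ G₁' G₂ G₂' W W' : Matrix n n A}
    (h₁ : G₁ * G₁' = c • 1) (h₁' : G₁' * G₁ = c • 1) (hG₁ : SemiconjBy G₁ D E₁)
    (h₂ : G₂ * G₂' = c • 1) (h₂' : G₂' * G₂ = c • 1) (hG₂ : SemiconjBy G₂ D E₂)
    (hW : G₂ = G₁ + c • W) (hW' : G₂' = G₁' + c • W') : IsConj E₁ E₂ := by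
  have hcancel := smul_right_injective (Matrix n n A) hc
  obtain ⟨U, hU⟩ : ∃ U, c • U = G₂ * G₁' :=
    ⟨1 + W * G₁', by rw [hW, add_mul, h₁, smul_add, smul_mul_assoc]⟩
  obtain ⟨U', hU'⟩ : ∃ U', c • U' = G₁ * G₂' :=
    ⟨1 + G₁ * W', by rw [hW', mul_add, h₁, smul_add, mul_smul_comm]⟩
  have hUU' : U * U' = 1 := hcancel <| hcancel <| by
    calc c • c • (U * U') = (c • U) * (c • U') := by simp
      _ = G₂ * (G₁' * G₁) * G₂' := by rw [hU, hU']; simp only [mul_assoc]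
      _ = c • c • 1 := by rw [h₁', mul_smul_comm, mul_one, smul_mul_assoc, h₂]
  have hU'U : U' * U = 1 := hcancel <| hcancel <| by
    calc c • c • (U' * U) = (c • U') * (c • U) := by simp
      _ = G₁ * (G₂' * G₂) * G₁' := by rw [hU, hU']; simp only [mul_assoc]
      _ = c • c • 1 := by rw [h₂', mul_smul_comm, mul_one, smul_mul_assoc, h₁]
  have hG₁' := semiconjBy_of_mul_eq_smul_one hc h₁ h₁' hG₁
  refine ⟨⟨U, U', hUU', hU'U⟩, hcancel ?_⟩
  calc c • (U * E₁) = (c • U) * E₁ := by simp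
    _ = E₂ * (c • U) := by rw [hU, (hG₂.mul_left hG₁').eq]
    _ = c • (E₂ * U) := by simp

/-- The matrices `E(X)` and `E(X + a Y)` are conjugate over `R[X][Y]`. The scalars `a` with this
property form the ideal on which Quillen's patching argument rests. -/
def ShiftConj (E : Matrix n n R[X]) (a : R) : Prop :=
  IsConj (C.mapMatrix E) ((shiftHom a).mapMatrix E)

namespace ShiftConj

variable {E : Matrix n n R[X]} {a b : R}

theorem zero (E : Matrix n n R[X]) : ShiftConj E 0 := by
  have h : shiftHom (0 : R) = C := by
    ext <;> simp [shiftHom]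
  rw [ShiftConj, h]

theorem add (ha : ShiftConj E a) (hb : ShiftConj E b) : ShiftConj E (a + b) := by
  let τ : R[X][X] →+* R[X][X] := eval₂RingHom (shiftHom b) X
  have hC : τ.comp C = shiftHom b := by
    ext <;> simp [τ]
  have hshift : τ.comp (shiftHom a) = shiftHom (a + b) := by
    refine Polynomial.ringHom_ext (fun r => by simp [τ, shiftHom_C]) ?_
    simp only [RingHom.coe_comp, coe_eval₂RingHom, Function.comp_apply, shiftHom_X, shiftHom_C,
      eval₂_add, eval₂_C, eval₂_mul, eval₂_X, map_add, τ]
    ring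
  have h := isConj_mapMatrix_comp τ ha
  rw [hC, hshift] at h
  exact hb.trans h

theorem mul_left (c : R) (ha : ShiftConj E a) : ShiftConj E (c * a) := by
  let τ : R[X][X] →+* R[X][X] := eval₂RingHom C (C (C c) * X)
  have hC : τ.comp C = C := by
    ext <;> simp [τ]
  have hshift : τ.comp (shiftHom a) = shiftHom (c * a) := by
    refine Polynomial.ringHom_ext (fun r => by simp [τ, shiftHom_C]) ?_
    simp only [RingHom.coe_comp, coe_eval₂RingHom, Function.comp_apply, shiftHom_X, eval₂_add,
      eval₂_C, eval₂_mul, eval₂_X, map_mul, τ]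
    ring
  have h := isConj_mapMatrix_comp τ ha
  rwa [hC, hshift] at h

theorem of_conjUpTo [IsDomain R] {D : Matrix n n R} {s : R} (hs : s ≠ 0)
    (h : ConjUpTo (C s) (C.mapMatrix D) E) : ShiftConj E s := by
  obtain ⟨G, G', hGG', hG'G, hG⟩ := h
  obtain ⟨W, hW⟩ := exists_mapMatrix_shiftHom_eq s G
  obtain ⟨W', hW'⟩ := exists_mapMatrix_shiftHom_eq s G'
  have hmap (σ : R[X] →+* R[X][X]) (hσ : σ (C s) = C (C s)) {H H' : Matrix n n R[X]}
      (h : H * H' = (C s : R[X]) • 1) :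
      σ.mapMatrix H * σ.mapMatrix H' = (C (C s) : R[X][X]) • 1 := by
    rw [← map_mul, h, mapMatrix_smul_one, hσ]
  have hD : (shiftHom s).mapMatrix (C.mapMatrix D) = C.mapMatrix (C.mapMatrix D) := by
    ext1 i j
    simp [shiftHom_C]
  have hs' : shiftHom s (C s) = C (C s) := shiftHom_C s s
  exact isConj_of_eq_add_smul (c := (C (C s) : R[X][X])) (by simpa using hs)
    (hmap C rfl hGG') (hmap C rfl hG'G) (hG.map C.mapMatrix)
    (hmap _ hs' hGG') (hmap _ hs' hG'G) (hD ▸ hG.map (shiftHom s).mapMatrix) hW hW'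

theorem isConj_eval_zero (h : ShiftConj E 1) :
    IsConj (C.mapMatrix ((evalRingHom 0).mapMatrix E)) E := by
  let τ : R[X][X] →+* R[X] := eval₂RingHom (C.comp (evalRingHom 0)) X
  have hC : τ.comp C = C.comp (evalRingHom 0) := by
    ext <;> simp [τ]
  have hshift : τ.comp (shiftHom 1) = RingHom.id _ := by
    ext <;> simp [τ, shiftHom]
  have h' := isConj_mapMatrix_comp τ h
  rw [hC, hshift] at h'
  simpa using h'

end ShiftConj

/-- **Quillen patching** for matrices. -/
theorem isConj_eval_zero_of_forall_isMaximal [IsDomain R] {E : Matrix n n R[X]}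
    (hloc : ∀ m : Ideal R, m.IsMaximal →
      ∃ s ∉ m, ∃ D : Matrix n n R, ConjUpTo (C s) (C.mapMatrix D) E) :
    IsConj (C.mapMatrix ((evalRingHom 0).mapMatrix E)) E := by
  let I : Ideal R :=
    { carrier := {a | ShiftConj E a}
      add_mem' := ShiftConj.add
      zero_mem' := ShiftConj.zero E
      smul_mem' := fun c _ h => h.mul_left c }
  have hI : I = ⊤ := by
    by_contra hne
    obtain ⟨m, hm, hIm⟩ := Ideal.exists_le_maximal I hne
    obtain ⟨s, hs, D, h⟩ := hloc m hm
    exact hs (hIm (ShiftConj.of_conjUpTo (fun h0 => hs (h0 ▸ m.zero_mem)) h))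
  exact ShiftConj.isConj_eval_zero ((Ideal.eq_top_iff_one I).1 hI)

end Patching

section ProjectiveFree

open Polynomial

/-- Projective-free rings in the sense of Cohn: every finitely generated projective module is free.
The notion is encoded through idempotent matrices, which are required to be conjugate to a diagonal
one with entries `1, …, 1, 0, …, 0`. -/
def IsProjectiveFree (A : Type*) [CommRing A] : Prop :=
  ∀ (N : ℕ) (E : Matrix (Fin N) (Fin N) A), IsIdempotentElem E →
    ∃ r ≤ N, IsConj (stdProj A N r) E

theorem IsProjectiveFree.of_ringEquiv {A B : Type*} [CommRing A] [CommRing B] (e : A ≃+* B)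
    (h : IsProjectiveFree A) : IsProjectiveFree B := by
  intro N E hE
  obtain ⟨r, hr, hconj⟩ := h N _ (hE.map (e.symm : B →+* A).mapMatrix)
  have h' := (e : A →+* B).mapMatrix.toMonoidHom.map_isConj hconj
  refine ⟨r, hr, ?_⟩
  convert h'
  · exact (mapMatrix_stdProj (e : A →+* B) N r).symm
  · ext i j
    simp

theorem isProjectiveFree_of_isPrincipalIdealRing (A : Type*) [CommRing A] [IsDomain A]
    [IsPrincipalIdealRing A] : IsProjectiveFree A := fun _ _ hE =>
  exists_isConj_stdProj_of_free hE

theorem ConjUpTo.exists_monic_of_C {K σ : Type*} [Field K] {N r : ℕ} {g : K[X]} (hg : g ≠ 0)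
    {E : Matrix (Fin N) (Fin N) (MvPolynomial σ K[X])}
    (h : ConjUpTo (MvPolynomial.C g) (stdProj _ N r) E) :
    ∃ g' : K[X], g'.Monic ∧ ConjUpTo (MvPolynomial.C g') (stdProj _ N r) E := by
  refine ⟨C g.leadingCoeff⁻¹ * g, ?_, ?_⟩
  · rw [mul_comm]
    exact monic_mul_leadingCoeff_inv hg
  · rw [map_mul]
    exact h.mul_left _

section

attribute [local instance] MvPolynomial.algebraMvPolynomial

/-- Over the field `K(X)` the ring `K[X][σ]` becomes a polynomial ring in the variables `σ`, and the
denominators that clear a conjugation there are polynomials in `X` alone, hence monic up to a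
unit. -/
theorem exists_monic_conjUpTo_stdProj {K σ : Type*} [Field K]
    (h : IsProjectiveFree (MvPolynomial σ (FractionRing K[X]))) {N : ℕ}
    {E : Matrix (Fin N) (Fin N) (MvPolynomial σ K)[X]} (hE : IsIdempotentElem E) :
    ∃ (r : ℕ) (f : (MvPolynomial σ K)[X]), f.Monic ∧ ConjUpTo f (stdProj _ N r) E := by
  let ψ : (MvPolynomial σ K)[X] ≃+* MvPolynomial σ K[X] :=
    ((MvPolynomial.optionEquivLeft K σ).symm.trans (MvPolynomial.optionEquivRight K σ)).toRingEquiv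
  have hψ (g : K[X]) : ψ (g.map MvPolynomial.C) = MvPolynomial.C g := by
    have : ψ.toRingHom.comp (mapRingHom MvPolynomial.C) = MvPolynomial.C := by
      refine Polynomial.ringHom_ext (fun x => ?_) ?_
      · simp [ψ, MvPolynomial.optionEquivLeft_symm_C_C]
      · simp [ψ, MvPolynomial.optionEquivLeft_symm_X]
    exact DFunLike.congr_fun this g
  let φ := algebraMap (MvPolynomial σ K[X]) (MvPolynomial σ (FractionRing K[X]))
  have hφ : Function.Injective φ :=
    MvPolynomial.map_injective _ (IsFractionRing.injective K[X] (FractionRing K[X]))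
  obtain ⟨r, -, hconj⟩ := h N (φ.mapMatrix (ψ.toRingHom.mapMatrix E)) ((hE.map _).map _)
  rw [← mapMatrix_stdProj φ] at hconj
  obtain ⟨_, ⟨g, hg, rfl⟩, hup⟩ := exists_conjUpTo_of_isConj_map
    ((nonZeroDivisors K[X]).map (MvPolynomial.C (σ := σ))) hφ hconj
  obtain ⟨g', hg', hup'⟩ := hup.exists_monic_of_C (nonZeroDivisors.ne_zero hg)
  have hback := hup'.map ψ.symm.toRingHom
  refine ⟨r, g'.map MvPolynomial.C, hg'.map _, ?_⟩
  convert hback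
  · exact ψ.eq_symm_apply.2 (hψ g')
  · exact (mapMatrix_stdProj _ N r).symm
  · ext1 i j
    simp

end

section

attribute [local instance] Polynomial.algebra Polynomial.isLocalization

theorem ConjUpTo.exists_notMem_of_monic {R : Type*} [CommRing R] [IsDomain R]
    [UniqueFactorizationMonoid R] {N r : ℕ} {E : Matrix (Fin N) (Fin N) R[X]} {f : R[X]}
    (h : ConjUpTo f (stdProj R[X] N r) E) (hf : f.Monic) (hE : IsIdempotentElem E)
    (m : Ideal R) [m.IsPrime] :
    ∃ s ∉ m, ∃ r', ConjUpTo (C s) (stdProj R[X] N r') E := by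
  let L := Localization.AtPrime m
  have hinj : Function.Injective (algebraMap R L) :=
    IsLocalization.injective L m.primeCompl_le_nonZeroDivisors
  have : IsDomain L := IsLocalization.isDomain_localization m.primeCompl_le_nonZeroDivisors
  let φ := algebraMap R[X] L[X]
  have hL := h.map φ
  rw [mapMatrix_stdProj] at hL
  obtain ⟨r', -, hconj⟩ := hL.exists_isConj_stdProj_of_monic
    (hf.map (algebraMap R L)) (hE.map φ.mapMatrix)
  rw [← mapMatrix_stdProj φ] at hconj
  obtain ⟨_, ⟨s, hs, rfl⟩, hs'⟩ := exists_conjUpTo_of_isConj_map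
    (m.primeCompl.map C) (Polynomial.map_injective _ hinj) hconj
  exact ⟨s, hs, r', hs'⟩

end

theorem IsProjectiveFree.polynomial {R : Type*} [CommRing R] [IsDomain R]
    [UniqueFactorizationMonoid R] (h : IsProjectiveFree R)
    (hmonic : ∀ (N : ℕ) (E : Matrix (Fin N) (Fin N) R[X]), IsIdempotentElem E →
      ∃ (r : ℕ) (f : R[X]), f.Monic ∧ ConjUpTo f (stdProj R[X] N r) E) :
    IsProjectiveFree R[X] := by
  intro N E hE
  obtain ⟨r, f, hf, hup⟩ := hmonic N E hE
  have hpatch : IsConj (C.mapMatrix ((evalRingHom 0).mapMatrix E)) E := by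
    refine isConj_eval_zero_of_forall_isMaximal fun m _ => ?_
    obtain ⟨s, hs, r', hs'⟩ := hup.exists_notMem_of_monic hf hE m
    exact ⟨s, hs, stdProj R N r', by rwa [mapMatrix_stdProj]⟩
  obtain ⟨r₀, hr₀, hconj⟩ := h N _ (hE.map (evalRingHom 0).mapMatrix)
  have hconst := (C : R →+* R[X]).mapMatrix.toMonoidHom.map_isConj hconj
  refine ⟨r₀, hr₀, ?_⟩
  rw [← mapMatrix_stdProj C]
  exact hconst.trans hpatch

/-- The **Quillen–Suslin theorem**. -/
theorem isProjectiveFree_mvPolynomial (σ K : Type*) [Finite σ] [Field K] :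
    IsProjectiveFree (MvPolynomial σ K) := by
  induction σ using Finite.induction_empty_option generalizing K with
  | of_equiv e ih =>
    exact .of_ringEquiv (MvPolynomial.renameEquiv K e).toRingEquiv (ih K)
  | h_empty =>
    exact .of_ringEquiv (MvPolynomial.isEmptyAlgEquiv K PEmpty).symm.toRingEquiv
      (isProjectiveFree_of_isPrincipalIdealRing K)
  | h_option ih =>
    exact .of_ringEquiv (MvPolynomial.optionEquivLeft K _).symm.toRingEquiv
      ((ih K).polynomial fun _ _ hE => exists_monic_conjUpTo_stdProj (ih _) hE)

end ProjectiveFree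

section Minors

open scoped Matrix

section Field

variable {K l m : Type*} [Field K] [Fintype m] {M : Matrix l m K} {r : ℕ}

theorem exists_linearIndependent_cols [Finite l] (hM : M.rank = r) :
    ∃ g : Fin r → m, LinearIndependent K fun k => M.col (g k) := by
  subst hM
  rw [M.rank_eq_finrank_span_cols]
  obtain ⟨v, hv, -, hli⟩ := Submodule.exists_fun_fin_finrank_span_eq K (Set.range M.col)
  choose g hg using hv
  exact ⟨g, by simpa only [hg] using hli⟩

theorem exists_det_submatrix_ne_zero_of_field [Finite l] (hM : M.rank = r) :
    ∃ (f : Fin r → l) (g : Fin r → m), (M.submatrix f g).det ≠ 0 := by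
  cases nonempty_fintype l
  obtain ⟨g, hg⟩ := exists_linearIndependent_cols hM
  have hrank : (M.submatrix id g)ᵀ.rank = r := by
    simpa using LinearIndependent.rank_matrix (M := (M.submatrix id g)ᵀ) hg
  obtain ⟨f, hf⟩ := exists_linearIndependent_cols hrank
  have hunit : IsUnit (M.submatrix f g) := Matrix.linearIndependent_rows_iff_isUnit.1 hf
  exact ⟨f, g, ((Matrix.isUnit_iff_isUnit_det _).1 hunit).ne_zero⟩

theorem exists_submatrix_mul_eq (hM : M.rank = r) {f : Fin r → l} {g : Fin r → m}
    (hdet : (M.submatrix f g).det ≠ 0) :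
    ∃ T : Matrix (Fin r) m K, M.submatrix id g * T = M := by
  have hle : LinearMap.range (M.submatrix id g).mulVecLin ≤ LinearMap.range M.mulVecLin := by
    simp only [Matrix.range_mulVecLin]
    exact Submodule.span_mono (Set.range_subset_iff.2 fun k => ⟨g k, rfl⟩)
  have hrank : r ≤ (M.submatrix id g).rank :=
    calc r = (M.submatrix f g).rank := by rw [Matrix.rank_of_det_ne_zero hdet, Fintype.card_fin]
      _ ≤ _ := (M.submatrix id g).rank_submatrix_le f id
  have heq := Submodule.eq_of_le_of_finrank_le hle (hM.trans_le hrank)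
  have hcol (j : m) : ∃ t : Fin r → K, (M.submatrix id g).mulVec t = M.col j := by
    classical
    have : M.col j ∈ LinearMap.range M.mulVecLin := ⟨Pi.single j 1, by simp⟩
    rwa [← heq] at this
  choose t ht using hcol
  exact ⟨Matrix.of fun k j => t j k, Matrix.ext fun i j => congrFun (ht j) i⟩

theorem submatrix_mul_adjugate_mul_submatrix_of_field (hM : M.rank = r)
    {f : Fin r → l} {g : Fin r → m} (hdet : (M.submatrix f g).det ≠ 0) :
    M.submatrix id g * (M.submatrix f g).adjugate * M.submatrix f id =
      (M.submatrix f g).det • M := by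
  obtain ⟨T, hT⟩ := exists_submatrix_mul_eq hM hdet
  have hT' : M.submatrix f id = M.submatrix f g * T :=
    Matrix.ext fun k j => (congrFun (congrFun hT (f k)) j).symm
  rw [hT', Matrix.mul_assoc, ← Matrix.mul_assoc _ _ T, Matrix.adjugate_mul, Matrix.smul_mul,
    Matrix.one_mul, Matrix.mul_smul, hT]

end Field

theorem rank_map_algebraMap {A l m : Type*} [CommRing A] [Finite l] [Fintype m] (K : Type*)
    [Field K] [Algebra A K] [IsFractionRing A K] (F : Matrix l m A) :
    (F.map (algebraMap A K)).rank = F.rank := by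
  let p := nonZeroDivisors A
  let ι : (l → A) →ₗ[A] l → K := .pi fun i => Algebra.linearMap A K ∘ₗ .proj i
  let M := Submodule.span A (Set.range F.col)
  have hspan : Submodule.span K (Set.range (F.map (algebraMap A K)).col) =
      M.localized' K p ι := by
    rw [Submodule.localized'_span, ← Set.range_comp]
    rfl
  rw [Matrix.rank_eq_finrank_span_cols, Matrix.rank_eq_finrank_span_cols, hspan,
    IsFractionRing.finrank_right_eq A K]
  exact IsLocalizedModule.finrank_eq p (M.toLocalized' K p ι) le_rfl

section IsDomain

variable {A l m : Type*} [CommRing A] [IsDomain A] [Fintype m] {r : ℕ}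

theorem rank_transpose_of_isDomain [Fintype l] (F : Matrix l m A) : Fᵀ.rank = F.rank := by
  rw [← rank_map_algebraMap (FractionRing A), ← rank_map_algebraMap (FractionRing A) F,
    Matrix.transpose_map, Matrix.rank_transpose]

theorem rank_stdProj {N : ℕ} (h : r ≤ N) : (stdProj A N r).rank = r := by
  classical
  rw [← rank_map_algebraMap (FractionRing A), ← RingHom.mapMatrix_apply, mapMatrix_stdProj,
    stdProj, Matrix.rank_diagonal]
  simp [Fintype.card_subtype, Fin.card_filter_val_lt, h]

theorem exists_det_submatrix_ne_zero [Finite l] {F : Matrix l m A} (hF : F.rank = r) :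
    ∃ (f : Fin r → l) (g : Fin r → m), (F.submatrix f g).det ≠ 0 := by
  obtain ⟨f, g, hfg⟩ :=
    exists_det_submatrix_ne_zero_of_field ((rank_map_algebraMap (FractionRing A) F).trans hF)
  refine ⟨f, g, fun h => hfg ?_⟩
  rw [Matrix.submatrix_map, ← RingHom.mapMatrix_apply, ← RingHom.map_det, h, map_zero]

/-- The decomposition `F = C * S⁻¹ * R` of a rank `r` matrix through an `r × r` submatrix `S` and
its rows `R` and columns `C`, with the denominator `det S` cleared. -/
theorem submatrix_mul_adjugate_mul_submatrix [Finite l] {F : Matrix l m A} (hF : F.rank = r)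
    {f : Fin r → l} {g : Fin r → m} (hdet : (F.submatrix f g).det ≠ 0) :
    F.submatrix id g * (F.submatrix f g).adjugate * F.submatrix f id =
      (F.submatrix f g).det • F := by
  let φ := algebraMap A (FractionRing A)
  have hφ : Function.Injective φ := IsFractionRing.injective A (FractionRing A)
  have hd : ((F.map φ).submatrix f g).det = φ (F.submatrix f g).det := (φ.map_det _).symm
  have hadj : ((F.map φ).submatrix f g).adjugate = (F.submatrix f g).adjugate.map φ :=
    (φ.map_adjugate _).symm
  have h := submatrix_mul_adjugate_mul_submatrix_of_field
    ((rank_map_algebraMap (FractionRing A) F).trans hF) (f := f) (g := g)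
    (hd ▸ (map_ne_zero_iff φ hφ).2 hdet)
  rw [hd, hadj] at h
  have hsmul : ((F.submatrix f g).det • F).map φ = φ (F.submatrix f g).det • F.map φ := by
    ext i j
    simp
  apply Matrix.map_injective hφ
  beta_reduce
  rw [Matrix.map_mul, Matrix.map_mul, hsmul]
  exact h

end IsDomain

section CommRing

variable {A : Type*} [CommRing A] {l m r : ℕ} {F : Matrix (Fin l) (Fin m) A} {d : A}

theorem minorsSet_transpose (r : ℕ) (F : Matrix (Fin l) (Fin m) A) :
    minorsSet r Fᵀ = minorsSet r F := by
  ext a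
  constructor
  all_goals
    rintro ⟨f, g, hf, hg, rfl⟩
    exact ⟨g, f, hg, hf, by rw [← Matrix.det_transpose]; rfl⟩

theorem ReducedMinorsUnitIdeal.transpose (hJ : ReducedMinorsUnitIdeal r F) :
    ReducedMinorsUnitIdeal r Fᵀ := by
  rwa [ReducedMinorsUnitIdeal, minorsSet_transpose]

theorem exists_perm_strictMono_comp {α : Type*} [LinearOrder α] {f : Fin r → α}
    (hf : Function.Injective f) :
    ∃ σ : Equiv.Perm (Fin r), StrictMono (f ∘ σ) :=
  ⟨Tuple.sort f, (Tuple.monotone_sort f).strictMono_of_injective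
    (hf.comp (Tuple.sort f).injective)⟩

theorem dvd_det_submatrix (hd : ∀ a ∈ minorsSet r F, d ∣ a) (f : Fin r → Fin l)
    (g : Fin r → Fin m) : d ∣ (F.submatrix f g).det := by
  by_cases hf : Function.Injective f
  swap
  · obtain ⟨i, j, hij, hne⟩ := Function.not_injective_iff.1 hf
    rw [Matrix.det_zero_of_row_eq hne (funext fun k => by simp [hij])]
    exact dvd_zero d
  by_cases hg : Function.Injective g
  swap
  · obtain ⟨i, j, hij, hne⟩ := Function.not_injective_iff.1 hg
    rw [Matrix.det_zero_of_column_eq hne fun k => by simp [hij]]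
    exact dvd_zero d
  obtain ⟨σ, hσ⟩ := exists_perm_strictMono_comp hf
  obtain ⟨τ, hτ⟩ := exists_perm_strictMono_comp hg
  have h := hd _ ⟨f ∘ σ, g ∘ τ, hσ, hτ, rfl⟩
  have hperm : F.submatrix (f ∘ σ) (g ∘ τ) =
      ((F.submatrix f g).submatrix σ id).submatrix id τ := rfl
  have hsign (ρ : Equiv.Perm (Fin r)) : IsUnit ((Equiv.Perm.sign ρ : ℤ) : A) :=
    (Equiv.Perm.sign ρ).isUnit.map (Int.castRingHom A)
  rwa [hperm, Matrix.det_permute', Matrix.det_permute, (hsign _).dvd_mul_left,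
    (hsign _).dvd_mul_left] at h

theorem adjugate_mul_submatrix_apply {l m : Type*} (F : Matrix l m A) (f : Fin r → l)
    (g : Fin r → m) (k : Fin r) (j : m) :
    ((F.submatrix f g).adjugate * F.submatrix f id) k j =
      (F.submatrix f (Function.update g k j)).det := by
  have h : ((F.submatrix f g).adjugate * F.submatrix f id) k j =
      (F.submatrix f g).adjugate.mulVec (fun i => F (f i) j) k := rfl
  rw [h, ← Matrix.cramer_eq_adjugate_mulVec, Matrix.cramer_apply]
  congr 1
  ext i i'
  by_cases hi : i' = k
  · subst hi
    simp
  · simp [hi]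

theorem exists_smul_eq_adjugate_mul_submatrix (hd : ∀ a ∈ minorsSet r F, d ∣ a)
    (f : Fin r → Fin l) (g : Fin r → Fin m) :
    ∃ C : Matrix (Fin r) (Fin m) A,
      d • C = (F.submatrix f g).adjugate * F.submatrix f id := by
  have hdvd (k : Fin r) (j : Fin m) :
      d ∣ ((F.submatrix f g).adjugate * F.submatrix f id) k j := by
    rw [adjugate_mul_submatrix_apply]
    exact dvd_det_submatrix hd _ _
  choose C hC using hdvd
  exact ⟨Matrix.of C, Matrix.ext fun k j => (hC k j).symm⟩

end CommRing

/-- The scalars `b` for which some `P` acts on the rows of `F` as multiplication by `b` and has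
rows that lie, up to the factor `1 / d`, in the row module of `F`. For `b = 1` and `d` a
nonzerodivisor such a `P` is an idempotent of the same rank as `F`. -/
def rowProjectorIdeal {A l m : Type*} [CommRing A] [Fintype l] [Fintype m] (d : A)
    (F : Matrix l m A) : Ideal A where
  carrier := {b | ∃ (P : Matrix m m A) (H : Matrix m l A), d • P = H * F ∧ F * P = b • F}
  zero_mem' := ⟨0, 0, by simp, by simp⟩
  add_mem' := by
    rintro b b' ⟨P, H, hPH, hFP⟩ ⟨P', H', hPH', hFP'⟩
    exact ⟨P + P', H + H', by rw [smul_add, hPH, hPH', Matrix.add_mul],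
      by rw [Matrix.mul_add, hFP, hFP', add_smul]⟩
  smul_mem' := by
    rintro c b ⟨P, H, hPH, hFP⟩
    exact ⟨c • P, c • H, by rw [smul_comm, hPH, Matrix.smul_mul],
      by rw [Matrix.mul_smul, hFP, smul_smul, smul_eq_mul]⟩

section ReducedMinors

variable {A : Type*} [CommRing A] [IsDomain A] {l m r : ℕ} {F : Matrix (Fin l) (Fin m) A} {d : A}

theorem ne_zero_of_forall_dvd_minorsSet (hF : F.rank = r) (hd : ∀ a ∈ minorsSet r F, d ∣ a) :
    d ≠ 0 := by
  obtain ⟨f, g, hfg⟩ := exists_det_submatrix_ne_zero hF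
  exact ne_zero_of_dvd_ne_zero hfg (dvd_det_submatrix hd f g)

theorem mem_rowProjectorIdeal_of_mul_mem_minorsSet (hF : F.rank = r)
    (hd : ∀ a ∈ minorsSet r F, d ∣ a) {b : A} (hb : d * b ∈ minorsSet r F) :
    b ∈ rowProjectorIdeal d F := by
  have hd0 := ne_zero_of_forall_dvd_minorsSet hF hd
  by_cases hb0 : b = 0
  · exact hb0 ▸ zero_mem _
  obtain ⟨f, g, -, -, hfg⟩ := hb
  obtain ⟨C, hC⟩ := exists_smul_eq_adjugate_mul_submatrix hd f g
  let ι : Matrix (Fin m) (Fin r) A := Matrix.submatrix 1 id g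
  let π : Matrix (Fin r) (Fin l) A := Matrix.submatrix 1 f id
  have hι : F * ι = F.submatrix id g := by
    ext i j
    simp [ι, Matrix.mul_apply, Matrix.one_apply]
  have hπ : π * F = F.submatrix f id := by
    ext i j
    simp [π, Matrix.mul_apply, Matrix.one_apply]
  refine ⟨ι * C, ι * (F.submatrix f g).adjugate * π, ?_,
    smul_right_injective (Matrix (Fin l) (Fin m) A) hd0 ?_⟩
  · rw [← Matrix.mul_smul, hC, Matrix.mul_assoc _ π, hπ, Matrix.mul_assoc]
  · calc d • (F * (ι * C)) = F * ι * (d • C) := by simp only [Matrix.mul_smul, Matrix.mul_assoc]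
      _ = F.submatrix id g * (F.submatrix f g).adjugate * F.submatrix f id := by
        rw [hC, hι, Matrix.mul_assoc]
      _ = (d * b) • F := by
        rw [submatrix_mul_adjugate_mul_submatrix hF (hfg ▸ mul_ne_zero hd0 hb0), hfg]
      _ = d • b • F := mul_smul d b F

theorem exists_isIdempotentElem_of_one_mem_rowProjectorIdeal (hd0 : d ≠ 0)
    (h : 1 ∈ rowProjectorIdeal d F) :
    ∃ E : Matrix (Fin m) (Fin m) A, IsIdempotentElem E ∧ F * E = F ∧ E.rank = F.rank := by
  obtain ⟨E, H, hEH, hFE⟩ := h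
  rw [one_smul] at hFE
  refine ⟨E, smul_right_injective (Matrix (Fin m) (Fin m) A) hd0 ?_, hFE, le_antisymm ?_ ?_⟩
  · calc d • (E * E) = H * (F * E) := by rw [← Matrix.smul_mul, hEH, Matrix.mul_assoc]
      _ = d • E := by rw [hFE, hEH]
  · calc E.rank = (d • E).rank :=
          (Matrix.rank_smul_of_mem_nonZeroDivisors E (mem_nonZeroDivisors_of_ne_zero hd0)).symm
      _ = (H * F).rank := by rw [hEH]
      _ ≤ F.rank := Matrix.rank_mul_le_right H F
  · calc F.rank = (F * E).rank := by rw [hFE]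
      _ ≤ E.rank := Matrix.rank_mul_le_right F E

theorem ReducedMinorsUnitIdeal.exists_isIdempotentElem (hJ : ReducedMinorsUnitIdeal r F)
    (hF : F.rank = r) :
    ∃ E : Matrix (Fin m) (Fin m) A, IsIdempotentElem E ∧ F * E = F ∧ E.rank = r := by
  obtain ⟨d, ⟨hd, -⟩, hspan⟩ := hJ
  have hle : Ideal.span {b | d * b ∈ minorsSet r F} ≤ rowProjectorIdeal d F :=
    Ideal.span_le.2 fun b hb => mem_rowProjectorIdeal_of_mul_mem_minorsSet hF hd hb
  rw [← hF]
  exact exists_isIdempotentElem_of_one_mem_rowProjectorIdeal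
    (ne_zero_of_forall_dvd_minorsSet hF hd) (hle (hspan ▸ Submodule.mem_top))

theorem ReducedMinorsUnitIdeal.exists_mul_stdProj_eq (hJ : ReducedMinorsUnitIdeal r F)
    (hA : IsProjectiveFree A) (hF : F.rank = r) :
    ∃ V : Matrix (Fin m) (Fin m) A, IsUnit V.det ∧ F * V * stdProj A m r = F * V := by
  obtain ⟨E, hE, hFE, hEr⟩ := hJ.exists_isIdempotentElem hF
  obtain ⟨s, hs, V, hV⟩ := hA m E hE
  have hdet : IsUnit V.val.det := (Matrix.isUnit_iff_isUnit_det _).1 V.isUnit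
  have hsr : s = r :=
    calc s = (V.val * stdProj A m s).rank := by
          rw [Matrix.rank_mul_eq_right_of_isUnit_det _ _ hdet, rank_stdProj hs]
      _ = r := by rw [hV.eq, Matrix.rank_mul_eq_left_of_isUnit_det _ _ hdet, hEr]
  subst hsr
  exact ⟨V, hdet, by rw [Matrix.mul_assoc, hV.eq, ← Matrix.mul_assoc, hFE]⟩

end ReducedMinors

theorem transpose_stdProj (A : Type*) [CommRing A] (N r : ℕ) :
    (stdProj A N r)ᵀ = stdProj A N r :=
  Matrix.diagonal_transpose _

theorem eq_of_dite_submatrix_castLE {A : Type*} [CommRing A] {l m r : ℕ} (hl : r ≤ l) (hm : r ≤ m)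
    {M : Matrix (Fin l) (Fin m) A} (hrow : stdProj A l r * M = M) (hcol : M * stdProj A m r = M) :
    M = Matrix.of fun (i : Fin l) (j : Fin m) =>
      if h : (i : ℕ) < r ∧ (j : ℕ) < r then
        M.submatrix (Fin.castLE hl) (Fin.castLE hm) ⟨i, h.1⟩ ⟨j, h.2⟩ else 0 := by
  ext i j
  rw [Matrix.of_apply]
  split_ifs with h
  · rfl
  · rcases not_and_or.1 h with hi | hj
    · rw [← hrow, stdProj, Matrix.diagonal_mul, if_neg hi, zero_mul]
    · rw [← hcol, stdProj, Matrix.mul_diagonal, if_neg hj, mul_zero]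

end Minors

theorem stmt10_general {A : Type*} [CommRing A] [IsDomain A] (hA : IsProjectiveFree A)
    {l m r : ℕ} (F : Matrix (Fin l) (Fin m) A) (hrank : F.rank = r)
    (hJ : ReducedMinorsUnitIdeal r F) :
    ∃ (U : Matrix (Fin l) (Fin l) A) (V : Matrix (Fin m) (Fin m) A)
      (G : Matrix (Fin r) (Fin r) A),
      IsUnit U.det ∧ IsUnit V.det ∧
      U * F * V = Matrix.of (fun (i : Fin l) (j : Fin m) =>
        if h : (i : ℕ) < r ∧ (j : ℕ) < r then G ⟨i, h.1⟩ ⟨j, h.2⟩ else 0) := by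
  obtain ⟨V, hV, hFV⟩ := hJ.exists_mul_stdProj_eq hA hrank
  obtain ⟨W, hW, hFW⟩ :=
    hJ.transpose.exists_mul_stdProj_eq hA ((rank_transpose_of_isDomain F).trans hrank)
  have hcol : W.transpose * F * V * stdProj A m r = W.transpose * F * V := by
    rw [Matrix.mul_assoc W.transpose, Matrix.mul_assoc W.transpose, hFV]
  have hrow : stdProj A l r * (W.transpose * F * V) = W.transpose * F * V := by
    have h := congrArg Matrix.transpose hFW
    simp only [Matrix.transpose_mul, Matrix.transpose_transpose, transpose_stdProj] at h
    rw [← Matrix.mul_assoc, h]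
  exact ⟨W.transpose, V, _, by rwa [Matrix.det_transpose], hV,
    eq_of_dite_submatrix_castLE (hrank ▸ F.rank_le_height) (hrank ▸ F.rank_le_width) hrow hcol⟩

/-- let `F ∈ A^{l×m}` (`A = K[x₁, …, x_n]`) with `rank F = r > 0`.
If the `r × r` reduced minors of `F` generate the unit ideal (`J_r(F) = A`),
then there are `U ∈ GL_l(A)`, `V ∈ GL_m(A)` such that `U·F·V` is the block
matrix with an `r × r` block `G` in the upper-left corner and zeros elsewhere. -/
theorem stmt10 {K : Type*} [Field K] {n l m r : ℕ} (hr : 0 < r)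
    (F : Matrix (Fin l) (Fin m) (MvPolynomial (Fin n) K))
    (hrank : F.rank = r)
    (hJ : ReducedMinorsUnitIdeal r F) :
    ∃ (U : Matrix (Fin l) (Fin l) (MvPolynomial (Fin n) K))
      (V : Matrix (Fin m) (Fin m) (MvPolynomial (Fin n) K))
      (G : Matrix (Fin r) (Fin r) (MvPolynomial (Fin n) K)),
      IsUnit U.det ∧ IsUnit V.det ∧
      U * F * V = Matrix.of (fun (i : Fin l) (j : Fin m) =>
        if h : (i : ℕ) < r ∧ (j : ℕ) < r then G ⟨i, h.1⟩ ⟨j, h.2⟩ else 0) :=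
  stmt10_general (isProjectiveFree_mvPolynomial (Fin n) K) F hrank hJ
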